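/- Let r, s, t be positive integers with r ≤ s, s + r ≤ t, and t + s + r ≤ min{N₁, N₂}. Suppose the linear map 𝓐 : ℝ^{N₁×N₂} → ℝ^m satisfies the modified rank-restricted isometry property of order t + s + r with constants 0 < α ≤ β, and let γ ≥ 1 satisfy β/α ≤ γ. Let X ∈ ℝ^{N₁×N₂} with rank(X) ≤ r, let e' ∈ ℝ^m, and let y := 𝓐(X) + e'. Let X_n ∈ ℝ^{N₁×N₂} with rank(X_n) ≤ s, and let W be a best rank-t approximation of 𝓐*(sgn(y − 𝓐(X_n))). If ‖𝓐(W)‖₁ ≥ 2γ·‖W‖_F², then ‖X − X_n‖_F ≤ (4γ/β)·‖e'‖₁. -/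

import Mathlib

noncomputable def frobNorm {N₁ N₂ : ℕ} (Z : Matrix (Fin N₁) (Fin N₂) ℝ) : ℝ :=
  Real.sqrt (∑ i, ∑ j, (Z i j) ^ 2)

def frobInner {N₁ N₂ : ℕ} (A B : Matrix (Fin N₁) (Fin N₂) ℝ) : ℝ :=
  ∑ i, ∑ j, A i j * B i j

def l1norm {m : ℕ} (v : Fin m → ℝ) : ℝ := ∑ i, |v i|

noncomputable def sgnVec {m : ℕ} (v : Fin m → ℝ) : Fin m → ℝ := fun i => Real.sign (v i)

def IsBestRankApprox {N₁ N₂ : ℕ} (k : ℕ) (Z H : Matrix (Fin N₁) (Fin N₂) ℝ) : Prop :=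
  H.rank ≤ k ∧
    ∀ W : Matrix (Fin N₁) (Fin N₂) ℝ, W.rank ≤ k → frobNorm (Z - H) ≤ frobNorm (Z - W)
lemma frobNorm_sq' {N₁ N₂ : ℕ} (Z : Matrix (Fin N₁) (Fin N₂) ℝ) :
    frobNorm Z ^ 2 = frobInner Z Z := by
  unfold frobNorm frobInner
  have h : 0 ≤ ∑ i, ∑ j, (Z i j) ^ 2 :=
    Finset.sum_nonneg fun i _ => Finset.sum_nonneg fun j _ => sq_nonneg _
  refine (Real.sq_sqrt h).trans ?_
  simp only [sq]

lemma frobNorm_nonneg' {N₁ N₂ : ℕ} (Z : Matrix (Fin N₁) (Fin N₂) ℝ) : 0 ≤ frobNorm Z :=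
  Real.sqrt_nonneg _

lemma frob_expand {N₁ N₂ : ℕ} (M Z : Matrix (Fin N₁) (Fin N₂) ℝ) (c : ℝ) :
    frobNorm (M - c • Z) ^ 2
      = frobNorm M ^ 2 - 2 * c * frobInner M Z + c ^ 2 * frobNorm Z ^ 2 := by
  simp only [frobNorm_sq']
  simp only [frobInner, Finset.mul_sum, ← Finset.sum_sub_distrib, ← Finset.sum_add_distrib]
  refine Finset.sum_congr rfl fun i _ => Finset.sum_congr rfl fun j _ => ?_
  simp only [Matrix.sub_apply, Matrix.smul_apply, smul_eq_mul]
  ring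

lemma rank_smul_le' {N₁ N₂ : ℕ} (Z : Matrix (Fin N₁) (Fin N₂) ℝ) (c : ℝ) :
    (c • Z).rank ≤ Z.rank := by
  have h : c • Z = Z * (c • (1 : Matrix (Fin N₂) (Fin N₂) ℝ)) := by simp
  rw [h]
  exact Matrix.rank_mul_le_left _ _

lemma rank_add_le'' {N₁ N₂ : ℕ} (Y Z : Matrix (Fin N₁) (Fin N₂) ℝ) :
    (Y + Z).rank ≤ Y.rank + Z.rank := by
  unfold Matrix.rank
  rw [Matrix.mulVecLin_add]
  refine (Submodule.finrank_mono (?_ : _ ≤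
    LinearMap.range Y.mulVecLin ⊔ LinearMap.range Z.mulVecLin)).trans
    (Submodule.finrank_add_le_finrank_add_finrank _ _)
  rintro _ ⟨v, rfl⟩
  exact Submodule.add_mem_sup ⟨v, rfl⟩ ⟨v, rfl⟩

lemma best_key {N₁ N₂ : ℕ} (k : ℕ) (M W D : Matrix (Fin N₁) (Fin N₂) ℝ)
    (hW : IsBestRankApprox k M W) (hD : D.rank ≤ k) (hd : 0 < frobNorm D) :
    frobInner M D ≤ frobNorm W * frobNorm D := by
  have hw0 := frobNorm_nonneg' W
  have key : ∀ (Z : Matrix (Fin N₁) (Fin N₂) ℝ), Z.rank ≤ k → ∀ c : ℝ,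
      - 2 * frobInner M W + frobNorm W ^ 2
        ≤ - 2 * c * frobInner M Z + c ^ 2 * frobNorm Z ^ 2 := by
    intro Z hZ c
    have h := hW.2 (c • Z) ((rank_smul_le' Z c).trans hZ)
    have h2 := pow_le_pow_left₀ (frobNorm_nonneg' _) h 2
    rw [frob_expand] at h2
    have h3 := frob_expand M W 1
    rw [one_smul] at h3
    linarith
  have hp : frobInner M W ≤ frobNorm W ^ 2 := by
    rcases hw0.eq_or_lt with h0 | h0
    · have := key W hW.1 2
      rw [← h0] at this ⊢
      linarith
    · have := key W hW.1 (frobInner M W / frobNorm W ^ 2)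
      have e : -2 * (frobInner M W / frobNorm W ^ 2) * frobInner M W
          + (frobInner M W / frobNorm W ^ 2) ^ 2 * frobNorm W ^ 2
          = - (frobInner M W ^ 2 / frobNorm W ^ 2) := by
        field_simp
        ring
      rw [e] at this
      have h4 : 0 < frobNorm W ^ 2 := by positivity
      have h5 : frobInner M W ^ 2 / frobNorm W ^ 2
          ≤ 2 * frobInner M W - frobNorm W ^ 2 := by linarith
      rw [div_le_iff₀ h4] at h5
      nlinarith [sq_nonneg (frobInner M W - frobNorm W ^ 2)]
  have := key D hD (frobInner M D / frobNorm D ^ 2)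
  have e : -2 * (frobInner M D / frobNorm D ^ 2) * frobInner M D
      + (frobInner M D / frobNorm D ^ 2) ^ 2 * frobNorm D ^ 2
      = - (frobInner M D ^ 2 / frobNorm D ^ 2) := by
    field_simp
    ring
  rw [e] at this
  have h4 : 0 < frobNorm D ^ 2 := by positivity
  have h5 : frobInner M D ^ 2 / frobNorm D ^ 2 ≤ frobNorm W ^ 2 := by linarith
  rw [div_le_iff₀ h4, ← mul_pow] at h5
  exact abs_le_of_sq_le_sq h5 (by positivity) |> (le_abs_self _).trans

lemma sgn_key {m : ℕ} (a e : Fin m → ℝ) :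
    l1norm a - 2 * l1norm e ≤ ∑ i, sgnVec (a + e) i * a i := by
  unfold l1norm sgnVec
  rw [Finset.mul_sum, ← Finset.sum_sub_distrib]
  refine Finset.sum_le_sum fun i _ => ?_
  simp only [Pi.add_apply]
  have h1 := le_abs_self (e i)
  have h2 := neg_abs_le (e i)
  rcases lt_trichotomy (a i + e i) 0 with h | h | h
  · rw [Real.sign_of_neg h]
    rcases abs_cases (a i) with h3 | h3 <;> linarith
  · rw [h, Real.sign_zero]
    rcases abs_cases (a i) with h3 | h3 <;> linarith
  · rw [Real.sign_of_pos h]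
    rcases abs_cases (a i) with h3 | h3 <;> linarith

/-- Stopping criterion: under the modified RIP of order t+s+r with ratio ≤ γ, if
rank(X) ≤ r, y = 𝓐(X) + e', rank(Xₙ) ≤ s, W is a best rank-t approximation of
𝓐*(sgn(y − 𝓐(Xₙ))), and ‖𝓐(W)‖₁ ≥ 2γ‖W‖_F², then ‖X − Xₙ‖_F ≤ (4γ/β)‖e'‖₁. -/
theorem stmt11 {N₁ N₂ m : ℕ} (r s t : ℕ) (hr : 0 < r) (hs : 0 < s) (ht : 0 < t)
    (hrs : r ≤ s) (hst : s + r ≤ t) (hdim : t + s + r ≤ min N₁ N₂)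
    (A : Matrix (Fin N₁) (Fin N₂) ℝ →ₗ[ℝ] (Fin m → ℝ))
    (Astar : (Fin m → ℝ) →ₗ[ℝ] Matrix (Fin N₁) (Fin N₂) ℝ)
    (hadj : ∀ (u : Fin m → ℝ) (Z : Matrix (Fin N₁) (Fin N₂) ℝ),
      frobInner (Astar u) Z = ∑ i, u i * A Z i)
    (α β : ℝ) (hα : 0 < α) (hαβ : α ≤ β)
    (hRIP : ∀ Z : Matrix (Fin N₁) (Fin N₂) ℝ, Z.rank ≤ t + s + r →
      α * frobNorm Z ≤ l1norm (A Z) ∧ l1norm (A Z) ≤ β * frobNorm Z)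
    (γ : ℝ) (hγ : 1 ≤ γ) (hratio : β / α ≤ γ)
    (X : Matrix (Fin N₁) (Fin N₂) ℝ) (hX : X.rank ≤ r)
    (e' : Fin m → ℝ) (y : Fin m → ℝ) (hy : y = A X + e')
    (Xn : Matrix (Fin N₁) (Fin N₂) ℝ) (hXn : Xn.rank ≤ s)
    (W : Matrix (Fin N₁) (Fin N₂) ℝ)
    (hW : IsBestRankApprox t (Astar (sgnVec (y - A Xn))) W)
    (hcond : 2 * γ * frobNorm W ^ 2 ≤ l1norm (A W)) :
    frobNorm (X - Xn) ≤ (4 * γ / β) * l1norm e' := by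
  have hβ : 0 < β := hα.trans_le hαβ
  have hγ0 : 0 < γ := by linarith
  have he0 : 0 ≤ l1norm e' := Finset.sum_nonneg fun i _ => abs_nonneg _
  have hDr : (X - Xn).rank ≤ s + r := by
    have h1 : X - Xn = X + (-1 : ℝ) • Xn := by simp [sub_eq_add_neg]
    have h2 := rank_add_le'' X ((-1 : ℝ) • Xn)
    have h3 := rank_smul_le' Xn (-1)
    rw [h1]
    omega
  rcases (frobNorm_nonneg' (X - Xn)).eq_or_lt with h0 | h0
  · rw [← h0]
    positivity
  have hk := best_key t _ W (X - Xn) hW (hDr.trans hst) h0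
  rw [hadj] at hk
  have hyD : y - A Xn = A (X - Xn) + e' := by
    rw [hy, map_sub]
    abel
  rw [hyD] at hk
  have hs2 := sgn_key (A (X - Xn)) e'
  have hD1 := (hRIP (X - Xn) (by omega)).1
  have hW1 := (hRIP W (by have := hW.1; omega)).2
  have hw : 2 * γ * frobNorm W ≤ β := by
    rcases (frobNorm_nonneg' W).eq_or_lt with h | h
    · rw [← h]
      linarith
    · refine le_of_mul_le_mul_right ?_ h
      linarith [hcond, hW1, sq (frobNorm W), mul_assoc (2 * γ) (frobNorm W) (frobNorm W)]
  rw [div_le_iff₀ hα] at hratio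
  have h6 : β * frobNorm (X - Xn) ≤ γ * (α * frobNorm (X - Xn)) := by
    nlinarith
  have h7 : γ * (α * frobNorm (X - Xn)) ≤
      γ * (frobNorm W * frobNorm (X - Xn) + 2 * l1norm e') :=
    mul_le_mul_of_nonneg_left (by linarith) hγ0.le
  have h8 := mul_le_mul_of_nonneg_right hw h0.le
  rw [div_mul_eq_mul_div, le_div_iff₀ hβ]
  linarith
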